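/- Let 𝒳 be a wealth-process set such that condition NA1 holds, let Q be a probability measure equivalent to P, and let X̂ be a strictly positive process with X̂_0 ≥ 1 that is the Fatou-limit of some 𝒳-valued sequence and such that X/X̂ is a Q-supermartingale for every X ∈ 𝒳. Then there exists an 𝒳-valued sequence (X^n) converging to X̂ uniformly on [0,T] in probability: sup_{t∈[0,T]} |X^n_t − X̂_t| → 0 in P-probability as n → ∞. -/

import Mathlib

open MeasureTheory Filter Set Topology
open scoped ENNReal

noncomputable section

namespace WPS

variable {Ω : Type*}

/-- A real function is càdlàg on `[0,T]`: right-continuous on `[0,T)` and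
with left limits on `(0,T]`. -/
def CadlagOn (T : ℝ) (f : ℝ → ℝ) : Prop :=
  (∀ t ∈ Set.Ico (0:ℝ) T, ContinuousWithinAt f (Set.Ici t) t) ∧
  (∀ t ∈ Set.Ioc (0:ℝ) T, ∃ l : ℝ, Filter.Tendsto f (nhdsWithin t (Set.Iio t)) (nhds l))

variable {m0 : MeasurableSpace Ω}

/-- A nonnegative càdlàg adapted process on the time interval `[0,T]`. -/
structure IsProcess (P : Measure Ω) (ℱ : Filtration ℝ m0) (T : ℝ) (X : ℝ → Ω → ℝ) : Prop where
  adapted : ∀ t ∈ Set.Icc (0:ℝ) T, Measurable[ℱ t] (X t)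
  cadlag : ∀ᵐ ω ∂P, CadlagOn T (fun t => X t ω)
  nonneg : ∀ᵐ ω ∂P, ∀ t ∈ Set.Icc (0:ℝ) T, 0 ≤ X t ω

/-- A process is strictly positive if a.s. `inf_{t ∈ [0,T]} X_t > 0`. -/
def StrictlyPos (P : Measure Ω) (T : ℝ) (X : ℝ → Ω → ℝ) : Prop :=
  ∀ᵐ ω ∂P, 0 < ⨅ t : Set.Icc (0:ℝ) T, X t ω

/-- A wealth-process set: a set of nonnegative càdlàg adapted processes with unit
initial value, containing a strictly positive element, and fork-convex. -/
structure IsWealthProcessSet (P : Measure Ω) (ℱ : Filtration ℝ m0) (T : ℝ)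
    (𝒳 : Set (ℝ → Ω → ℝ)) : Prop where
  proc : ∀ X ∈ 𝒳, IsProcess P ℱ T X
  init_one : ∀ X ∈ 𝒳, ∀ᵐ ω ∂P, X 0 ω = 1
  exists_pos : ∃ X ∈ 𝒳, StrictlyPos P T X
  forkConvex : ∀ s ∈ Set.Icc (0:ℝ) T, ∀ X ∈ 𝒳, ∀ X' ∈ 𝒳, ∀ X'' ∈ 𝒳,
    StrictlyPos P T X' → StrictlyPos P T X'' →
    ∀ α : Ω → ℝ, Measurable[ℱ s] α → (∀ ω, α ω ∈ Set.Icc (0:ℝ) 1) →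
      (fun t ω => if t < s then X t ω
        else α ω * (X s ω / X' s ω) * X' t ω
          + (1 - α ω) * (X s ω / X'' s ω) * X'' t ω) ∈ 𝒳

/-- `ξ` is an arbitrage of the first kind for the wealth-process set `𝒳`. -/
def IsArbitrageOfFirstKind (P : Measure Ω) (T : ℝ) (𝒳 : Set (ℝ → Ω → ℝ))
    (ξ : Ω → ℝ) : Prop :=
  Measurable ξ ∧ (∀ᵐ ω ∂P, 0 ≤ ξ ω) ∧ P {ω | 0 < ξ ω} ≠ 0 ∧
    ∀ x : ℝ, 0 < x → ∃ X ∈ 𝒳, ∀ᵐ ω ∂P, ξ ω ≤ x * X T ω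

/-- Condition NA₁: there is no arbitrage of the first kind. -/
def NA1 (P : Measure Ω) (T : ℝ) (𝒳 : Set (ℝ → Ω → ℝ)) : Prop :=
  ¬ ∃ ξ : Ω → ℝ, IsArbitrageOfFirstKind P T 𝒳 ξ

/-- `Z` is a `Q`-supermartingale on `[0,T]` with respect to the filtration `ℱ`. -/
def SupermartingaleOn (Q : Measure Ω) (ℱ : Filtration ℝ m0) (T : ℝ)
    (Z : ℝ → Ω → ℝ) : Prop :=
  (∀ t ∈ Set.Icc (0:ℝ) T, Measurable[ℱ t] (Z t)) ∧
  (∀ t ∈ Set.Icc (0:ℝ) T, Integrable (Z t) Q) ∧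
  ∀ s t : ℝ, 0 ≤ s → s ≤ t → t ≤ T → ∀ᵐ ω ∂Q, (Q[Z t | ℱ s]) ω ≤ Z s ω

/-- `Z` is a `Q`-martingale on `[0,T]` with respect to the filtration `ℱ`. -/
def MartingaleOn (Q : Measure Ω) (ℱ : Filtration ℝ m0) (T : ℝ)
    (Z : ℝ → Ω → ℝ) : Prop :=
  (∀ t ∈ Set.Icc (0:ℝ) T, Measurable[ℱ t] (Z t)) ∧
  (∀ t ∈ Set.Icc (0:ℝ) T, Integrable (Z t) Q) ∧
  ∀ s t : ℝ, 0 ≤ s → s ≤ t → t ≤ T → (Q[Z t | ℱ s]) =ᵐ[Q] Z s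

/-- The sequence `(Xⁿ)` of nonnegative processes Fatou-converges to `X`:
there is a countable dense set `𝕋 ⊆ [0,T]` containing `T` such that a.s., for all
`t ∈ [0,T]`, `X_t` equals both the liminf of liminfs and the limsup of limsups of
`Xⁿ_s` as `𝕋 ∋ s ↓ t` (computed in the extended reals). -/
def FatouLim (P : Measure Ω) (T : ℝ) (Xn : ℕ → ℝ → Ω → ℝ) (X : ℝ → Ω → ℝ) : Prop :=
  ∃ 𝕋 : Set ℝ, 𝕋.Countable ∧ 𝕋 ⊆ Set.Icc (0:ℝ) T ∧ T ∈ 𝕋 ∧ Set.Icc (0:ℝ) T ⊆ closure 𝕋 ∧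
    ∀ᵐ ω ∂P, ∀ t ∈ Set.Icc (0:ℝ) T,
      ((X t ω : EReal) =
        Filter.liminf (fun s : ℝ =>
          Filter.liminf (fun n : ℕ => (Xn n s ω : EReal)) Filter.atTop)
          (nhdsWithin t (𝕋 ∩ Set.Ici t))) ∧
      ((X t ω : EReal) =
        Filter.limsup (fun s : ℝ =>
          Filter.limsup (fun n : ℕ => (Xn n s ω : EReal)) Filter.atTop)
          (nhdsWithin t (𝕋 ∩ Set.Ici t)))

/-- The Fatou-closure of `𝒳`: all nonnegative càdlàg adapted processes that are
Fatou-limits of `𝒳`-valued sequences. -/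
def FatouClosure (P : Measure Ω) (ℱ : Filtration ℝ m0) (T : ℝ)
    (𝒳 : Set (ℝ → Ω → ℝ)) : Set (ℝ → Ω → ℝ) :=
  {X | IsProcess P ℱ T X ∧
    ∃ Xn : ℕ → ℝ → Ω → ℝ, (∀ n, Xn n ∈ 𝒳) ∧ FatouLim P T Xn X}

/-- The process-polar `𝒳°` of `𝒳`. -/
def processPolar (P : Measure Ω) (ℱ : Filtration ℝ m0) (T : ℝ)
    (𝒳 : Set (ℝ → Ω → ℝ)) : Set (ℝ → Ω → ℝ) :=
  {Y | IsProcess P ℱ T Y ∧ (∀ᵐ ω ∂P, Y 0 ω ≤ 1) ∧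
    ∀ X ∈ 𝒳, SupermartingaleOn P ℱ T (fun t ω => Y t ω * X t ω)}

/-- The process-bipolar `𝒳°°` of `𝒳`. -/
def processBipolar (P : Measure Ω) (ℱ : Filtration ℝ m0) (T : ℝ)
    (𝒳 : Set (ℝ → Ω → ℝ)) : Set (ℝ → Ω → ℝ) :=
  {X | IsProcess P ℱ T X ∧ (∀ᵐ ω ∂P, X 0 ω ≤ 1) ∧
    ∀ Y ∈ processPolar P ℱ T 𝒳, SupermartingaleOn P ℱ T (fun t ω => Y t ω * X t ω)}

/-- The family `{X_t : X ∈ 𝒳, t ∈ [0,T]}` is bounded in probability. -/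
def FamilyBddInProb (P : Measure Ω) (T : ℝ) (𝒳 : Set (ℝ → Ω → ℝ)) : Prop :=
  Filter.Tendsto (fun l : ℝ => ⨆ X ∈ 𝒳, ⨆ t ∈ Set.Icc (0:ℝ) T, P {ω | l < X t ω})
    Filter.atTop (nhds 0)

/-- Uniform (on `[0,T]`) convergence in probability of `(Xⁿ)` to `X`. -/
def UnifTendstoInProb (P : Measure Ω) (T : ℝ) (Xn : ℕ → ℝ → Ω → ℝ)
    (X : ℝ → Ω → ℝ) : Prop :=
  ∀ ε : ℝ, 0 < ε →
    Filter.Tendsto (fun n => P {ω | ∃ t ∈ Set.Icc (0:ℝ) T, ε ≤ |Xn n t ω - X t ω|})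
      Filter.atTop (nhds 0)

/-- The positive part of an extended real, as an extended nonnegative real. -/
def erealPos (x : EReal) : ℝ≥0∞ := if x = ⊤ then ⊤ else ENNReal.ofReal x.toReal

/-- The utility function extended to `0` by `U(0) := lim_{x ↓ 0} U(x)` (an extended real). -/
def extUtil (U : ℝ → ℝ) (w : ℝ) : EReal :=
  if 0 < w then (U w : EReal)
  else Filter.liminf (fun x : ℝ => (U x : EReal)) (nhdsWithin 0 (Set.Ioi 0))

/-- The expected utility `E[U(W)]` as an extended real, with the convention that it
equals `−∞` whenever `E[min(0, U(W))] = −∞`. -/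
def expUtility (P : Measure Ω) (U : ℝ → ℝ) (W : Ω → ℝ) : EReal :=
  if (∫⁻ ω, erealPos (-(extUtil U (W ω))) ∂P) = ⊤ then ⊥
  else ((∫⁻ ω, erealPos (extUtil U (W ω)) ∂P : ℝ≥0∞) : EReal)
    - ((∫⁻ ω, erealPos (-(extUtil U (W ω))) ∂P : ℝ≥0∞) : EReal)

/-- Set-integral form of the supermartingale inequality. -/
lemma SupermartingaleOn.setIntegral_le {Q : Measure Ω} [IsProbabilityMeasure Q]
    {ℱ : Filtration ℝ m0} {T : ℝ} {Z : ℝ → Ω → ℝ} (h : SupermartingaleOn Q ℱ T Z)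
    {s t : ℝ} (hs : 0 ≤ s) (hst : s ≤ t) (ht : t ≤ T) {A : Set Ω} (hA : MeasurableSet[ℱ s] A) :
    ∫ ω in A, Z t ω ∂Q ≤ ∫ ω in A, Z s ω ∂Q := by
  obtain ⟨-, h2, h3⟩ := h
  rw [← setIntegral_condExp (ℱ.le s) (h2 t ⟨hs.trans hst, ht⟩) hA]
  refine setIntegral_mono_ae integrable_condExp.integrableOn
    (h2 s ⟨hs, hst.trans ht⟩).integrableOn (h3 s t hs hst ht)

lemma upper_step {Q : Measure Ω} [IsProbabilityMeasure Q]
    {ℱ : Filtration ℝ m0} {T : ℝ} {Z : ℝ → Ω → ℝ} (h : SupermartingaleOn Q ℱ T Z)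
    (h0 : ∀ᵐ ω ∂Q, Z 0 ω ≤ 1) {η : ℝ} (hη : 0 < η) (τ : ℕ → ℝ) (hτ0 : τ 0 = 0)
    (hτm : Monotone τ) (N : ℕ) (hτT : τ N ≤ T) (i : ℕ) (hi : i ≤ N) :
    MeasurableSet[ℱ (τ i)] {ω | ∃ k ≤ i, 1 + η < Z (τ k) ω} ∧
    ∫ ω in {ω | ∃ k ≤ i, 1 + η < Z (τ k) ω}ᶜ, Z (τ i) ω ∂Q
      + (1 + η) * Q.real {ω | ∃ k ≤ i, 1 + η < Z (τ k) ω} ≤ 1 := by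
  have hmem : ∀ k ≤ N, τ k ∈ Set.Icc (0:ℝ) T := fun k hk =>
    ⟨hτ0 ▸ hτm (Nat.zero_le k), (hτm hk).trans hτT⟩
  have hmeas : ∀ i ≤ N, MeasurableSet[ℱ (τ i)] {ω | ∃ k ≤ i, 1 + η < Z (τ k) ω} := by
    intro i hi
    have : {ω | ∃ k ≤ i, 1 + η < Z (τ k) ω} = ⋃ k, ⋃ (_ : k ≤ i), {ω | 1 + η < Z (τ k) ω} := by
      ext ω; simp
    rw [this]
    refine MeasurableSet.iUnion fun k => MeasurableSet.iUnion fun hk => ?_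
    exact ℱ.mono (hτm hk) _ ((h.1 _ (hmem k (hk.trans hi))) measurableSet_Ioi)
  refine ⟨hmeas i hi, ?_⟩
  induction i with
  | zero =>
    have hnull : Q.real {ω | ∃ k ≤ 0, 1 + η < Z (τ k) ω} = 0 := by
      rw [measureReal_def, (?_ : Q {ω | ∃ k ≤ 0, 1 + η < Z (τ k) ω} = 0), ENNReal.toReal_zero]
      rw [← compl_compl {ω | ∃ k ≤ 0, 1 + η < Z (τ k) ω}]
      rw [← mem_ae_iff]
      filter_upwards [h0] with ω hω
      simp only [nonpos_iff_eq_zero, exists_eq_left, mem_compl_iff, mem_setOf_eq, hτ0]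
      linarith
    rw [hnull, mul_zero, add_zero]
    have hm0 := (ℱ.le _ _ (hmeas 0 hi))
    calc _ ≤ ∫ ω in {ω | ∃ k ≤ 0, 1 + η < Z (τ k) ω}ᶜ, (1:ℝ) ∂Q := by
          refine setIntegral_mono_ae (h.2.1 _ (hmem 0 hi)).integrableOn
            (integrable_const _).integrableOn ?_
          rw [hτ0]; exact h0
      _ ≤ 1 := by simp [measureReal_le_one]
  | succ i ih =>
    have ih := ih (by omega)
    set A := {ω | ∃ k ≤ i, 1 + η < Z (τ k) ω} with hA
    set A' := {ω | ∃ k ≤ i + 1, 1 + η < Z (τ k) ω} with hA'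
    have hmA : MeasurableSet[ℱ (τ i)] A := hmeas i (by omega)
    have hmA' : MeasurableSet A' := ℱ.le _ _ (hmeas (i+1) hi)
    have hmA0 : MeasurableSet A := ℱ.le _ _ hmA
    have hsub : A ⊆ A' := fun ω ⟨k, hk, h⟩ => ⟨k, by omega, h⟩
    have hint := h.2.1 _ (hmem (i+1) hi)
    have h1 := h.setIntegral_le (hmem i (by omega)).1 (hτm (Nat.le_succ i)) (hmem (i+1) hi).2
      hmA.compl
    have hB : MeasurableSet (A' \ A) := hmA'.diff hmA0
    have hsplit : Aᶜ = A'ᶜ ∪ (A' \ A) := by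
      ext ω; have := @hsub ω; simp only [mem_compl_iff, mem_union, mem_diff]; tauto
    have h2 : ∫ ω in Aᶜ, Z (τ (i+1)) ω ∂Q
        = ∫ ω in A'ᶜ, Z (τ (i+1)) ω ∂Q + ∫ ω in A' \ A, Z (τ (i+1)) ω ∂Q := by
      rw [hsplit]
      refine setIntegral_union ?_ hB hint.integrableOn hint.integrableOn
      exact Set.disjoint_left.2 fun ω h1 h2 => h1 h2.1
    have h3 : (1 + η) * Q.real (A' \ A) ≤ ∫ ω in A' \ A, Z (τ (i+1)) ω ∂Q := by
      have : ∫ ω in A' \ A, (1 + η) ∂Q = (1 + η) * Q.real (A' \ A) := by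
        simp [mul_comm]
      rw [← this]
      refine setIntegral_mono_on (integrable_const _).integrableOn hint.integrableOn hB ?_
      rintro ω ⟨⟨k, hk, hk2⟩, hn⟩
      rcases Nat.lt_or_ge k (i+1) with h' | h'
      · exact absurd ⟨k, by omega, hk2⟩ hn
      · obtain rfl : k = i + 1 := by omega
        exact hk2.le
    have h4 : Q.real A' = Q.real A + Q.real (A' \ A) := by
      rw [measureReal_diff hsub hmA0]; ring
    rw [h4]
    linarith

lemma lower_step {Q : Measure Ω} [IsProbabilityMeasure Q]
    {ℱ : Filtration ℝ m0} {T : ℝ} {Z : ℝ → Ω → ℝ} (h : SupermartingaleOn Q ℱ T Z)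
    {η : ℝ} (τ : ℕ → ℝ) (hτ0 : τ 0 = 0)
    (hτm : Monotone τ) (N : ℕ) (hτT : τ N ≤ T) (i : ℕ) (hi : i ≤ N) :
    MeasurableSet[ℱ (τ i)] {ω | ∃ k ≤ i, Z (τ k) ω < 1 - η} ∧
    ∫ ω in {ω | ∃ k ≤ i, Z (τ k) ω < 1 - η}, Z T ω ∂Q
      ≤ (1 - η) * Q.real {ω | ∃ k ≤ i, Z (τ k) ω < 1 - η} := by
  have hmem : ∀ k ≤ N, τ k ∈ Set.Icc (0:ℝ) T := fun k hk =>
    ⟨hτ0 ▸ hτm (Nat.zero_le k), (hτm hk).trans hτT⟩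
  have hTT : T ∈ Set.Icc (0:ℝ) T := ⟨(hmem 0 (Nat.zero_le _)).1.trans (hmem 0 (Nat.zero_le _)).2, le_rfl⟩
  have hmeas : ∀ i ≤ N, MeasurableSet[ℱ (τ i)] {ω | ∃ k ≤ i, Z (τ k) ω < 1 - η} := by
    intro i hi
    have : {ω | ∃ k ≤ i, Z (τ k) ω < 1 - η} = ⋃ k, ⋃ (_ : k ≤ i), {ω | Z (τ k) ω < 1 - η} := by
      ext ω; simp
    rw [this]
    refine MeasurableSet.iUnion fun k => MeasurableSet.iUnion fun hk => ?_
    exact ℱ.mono (hτm hk) _ ((h.1 _ (hmem k (hk.trans hi))) measurableSet_Iio)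
  have key : ∀ i ≤ N, ∀ B : Set Ω, MeasurableSet[ℱ (τ i)] B → (∀ ω ∈ B, Z (τ i) ω < 1 - η) →
      ∫ ω in B, Z T ω ∂Q ≤ (1 - η) * Q.real B := by
    intro i hi B hB hlt
    refine (h.setIntegral_le (hmem i hi).1 (hmem i hi).2 le_rfl hB).trans ?_
    have : ∫ ω in B, (1 - η) ∂Q = (1 - η) * Q.real B := by simp [mul_comm]
    rw [← this]
    exact setIntegral_mono_on (h.2.1 _ (hmem i hi)).integrableOn (integrable_const _).integrableOn
      (ℱ.le _ _ hB) fun ω hω => (hlt ω hω).le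
  refine ⟨hmeas i hi, ?_⟩
  induction i with
  | zero =>
    refine key 0 hi _ (hmeas 0 hi) ?_
    rintro ω ⟨k, hk, h⟩
    obtain rfl : k = 0 := by omega
    exact h
  | succ i ih =>
    have ih := ih (by omega)
    set A := {ω | ∃ k ≤ i, Z (τ k) ω < 1 - η} with hA
    set A' := {ω | ∃ k ≤ i + 1, Z (τ k) ω < 1 - η} with hA'
    have hmA : MeasurableSet[ℱ (τ (i+1))] A := ℱ.mono (hτm (Nat.le_succ i)) _ (hmeas i (by omega))
    have hmA' : MeasurableSet[ℱ (τ (i+1))] A' := hmeas (i+1) hi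
    have hmA0 : MeasurableSet A := ℱ.le _ _ hmA
    have hsub : A ⊆ A' := fun ω ⟨k, hk, h⟩ => ⟨k, by omega, h⟩
    have hint := h.2.1 T hTT
    have hB : MeasurableSet[ℱ (τ (i+1))] (A' \ A) := hmA'.diff hmA
    have h3 := key (i+1) hi (A' \ A) hB (by
      rintro ω ⟨⟨k, hk, hk2⟩, hn⟩
      rcases Nat.lt_or_ge k (i+1) with h' | h'
      · exact absurd ⟨k, by omega, hk2⟩ hn
      · obtain rfl : k = i + 1 := by omega
        exact hk2)
    have h2 : ∫ ω in A', Z T ω ∂Q = ∫ ω in A, Z T ω ∂Q + ∫ ω in A' \ A, Z T ω ∂Q := by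
      conv_lhs => rw [← Set.union_diff_cancel hsub]
      exact setIntegral_union disjoint_sdiff_self_right (ℱ.le _ _ hB) hint.integrableOn
        hint.integrableOn
    have h4 : Q.real A' = Q.real A + Q.real (A' \ A) := by
      rw [measureReal_diff hsub hmA0]; ring
    rw [h4, h2]
    linarith

lemma grid_bound {Q : Measure Ω} [IsProbabilityMeasure Q]
    {ℱ : Filtration ℝ m0} {T : ℝ} {Z : ℝ → Ω → ℝ} (h : SupermartingaleOn Q ℱ T Z)
    (h0 : ∀ᵐ ω ∂Q, Z 0 ω ≤ 1) {η : ℝ} (hη : 0 < η) (τ : ℕ → ℝ) (hτ0 : τ 0 = 0)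
    (hτm : Monotone τ) (N : ℕ) (hτT : τ N = T) :
    Q {ω | ∃ k ≤ N, η < |Z (τ k) ω - 1|}
      ≤ ENNReal.ofReal (2 * (∫ ω, max (1 - Z T ω) 0 ∂Q) / η) := by
  obtain ⟨mU, hU⟩ := upper_step h h0 hη τ hτ0 hτm N hτT.le N le_rfl
  obtain ⟨mL, hL⟩ := lower_step (η := η) h τ hτ0 hτm N hτT.le N le_rfl
  set U := {ω | ∃ k ≤ N, 1 + η < Z (τ k) ω}
  set L := {ω | ∃ k ≤ N, Z (τ k) ω < 1 - η}
  have hTT : T ∈ Set.Icc (0:ℝ) T :=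
    ⟨by rw [← hτT, ← hτ0]; exact hτm (Nat.zero_le _), le_rfl⟩
  have hint := h.2.1 T hTT
  have hmint : Integrable (fun ω => max (1 - Z T ω) 0) Q :=
    ((integrable_const 1).sub hint).pos_part
  set δ := ∫ ω, max (1 - Z T ω) 0 ∂Q
  have key : ∀ A : Set Ω, MeasurableSet A → Q.real A - δ ≤ ∫ ω in A, Z T ω ∂Q := by
    intro A hA
    have h1 : ∫ ω in A, max (1 - Z T ω) 0 ∂Q ≤ δ :=
      setIntegral_le_integral hmint (Eventually.of_forall fun ω => le_max_right _ _)
    have h2 : ∫ ω in A, (1 - Z T ω) ∂Q ≤ ∫ ω in A, max (1 - Z T ω) 0 ∂Q :=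
      setIntegral_mono ((integrable_const 1).sub hint).integrableOn hmint.integrableOn
        fun ω => le_max_left _ _
    have h3 : ∫ ω in A, (1 - Z T ω) ∂Q = Q.real A - ∫ ω in A, Z T ω ∂Q := by
      rw [integral_sub (integrable_const _).integrableOn hint.integrableOn]
      simp
    linarith
  have mU' := ℱ.le _ _ mU
  have mL' := ℱ.le _ _ mL
  have kU := key _ mU'.compl
  have kL := key _ mL'
  rw [hτT] at hU
  rw [probReal_compl_eq_one_sub mU'] at kU
  have bU : Q.real U ≤ δ / η := by rw [le_div_iff₀ hη]; linarith
  have bL : Q.real L ≤ δ / η := by rw [le_div_iff₀ hη]; linarith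
  have hsub : {ω | ∃ k ≤ N, η < |Z (τ k) ω - 1|} ⊆ U ∪ L := by
    rintro ω ⟨k, hk, hlt⟩
    rcases lt_abs.1 hlt with h' | h'
    · exact Or.inl ⟨k, hk, by linarith⟩
    · exact Or.inr ⟨k, hk, by linarith⟩
  refine (measure_mono hsub).trans ?_
  rw [← ofReal_measureReal]
  refine ENNReal.ofReal_le_ofReal ((measureReal_union_le U L).trans ?_)
  rw [mul_div_assoc]; linarith

/-- If an open condition holds at some time of a path that is right-continuous, it holds
eventually at some grid point. -/
lemma grid_of_exists {T : ℝ} (hT : 0 < T) {f : ℝ → ℝ}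
    (hf : ∀ t ∈ Set.Ico (0:ℝ) T, ContinuousWithinAt f (Set.Ici t) t)
    {V : Set ℝ} (hV : IsOpen V) (h : ∃ t ∈ Set.Icc (0:ℝ) T, f t ∈ V) :
    ∀ᶠ n : ℕ in atTop, ∃ k ≤ n + 1, f (T * k / (n + 1 : ℕ)) ∈ V := by
  obtain ⟨t, ht, htV⟩ := h
  rcases ht.2.lt_or_eq with hlt | rfl
  · have hc := hf t ⟨ht.1, hlt⟩
    have hs : Tendsto (fun n : ℕ => T * (⌈t / T * (n + 1 : ℕ)⌉₊ : ℝ) / (n + 1 : ℕ)) atTop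
        (𝓝[Set.Ici t] t) := by
      refine tendsto_nhdsWithin_iff.2 ⟨?_, Eventually.of_forall fun n => ?_⟩
      · have h1 := (tendsto_nat_ceil_mul_div_atTop (R := ℝ) (a := t / T)
          (div_nonneg ht.1 hT.le)).comp
          (tendsto_natCast_atTop_atTop.comp (tendsto_add_atTop_nat 1))
        have h2 := h1.const_mul T
        rw [mul_div_cancel₀ _ hT.ne'] at h2
        refine h2.congr fun n => ?_
        simp [mul_div_assoc]
      · have hn : (0:ℝ) < (n + 1 : ℕ) := by positivity
        rw [Set.mem_Ici, le_div_iff₀ hn]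
        have := Nat.le_ceil (t / T * (n + 1 : ℕ))
        calc t * (n + 1 : ℕ) = T * (t / T * (n + 1 : ℕ)) := by field_simp
          _ ≤ _ := by gcongr
    filter_upwards [(hc.tendsto.comp hs) (hV.mem_nhds htV)] with n hn
    refine ⟨_, ?_, hn⟩
    apply Nat.ceil_le.2
    have : t / T ≤ 1 := by rw [div_le_one hT]; exact ht.2
    calc t / T * (n + 1 : ℕ) ≤ 1 * (n + 1 : ℕ) := by gcongr
      _ = _ := one_mul _
  · refine Eventually.of_forall fun n => ⟨n + 1, le_rfl, ?_⟩
    rwa [mul_div_cancel_right₀]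
    positivity

lemma grid_mem {T : ℝ} (hT : 0 < T) {n k : ℕ} (hk : k ≤ n + 1) :
    T * k / (n + 1 : ℕ) ∈ Set.Icc (0:ℝ) T := by
  have hn : (0:ℝ) < (n + 1 : ℕ) := by positivity
  refine ⟨by positivity, ?_⟩
  rw [div_le_iff₀ hn]
  gcongr

lemma unif_bound {Q : Measure Ω} [IsProbabilityMeasure Q]
    {ℱ : Filtration ℝ m0} {T : ℝ} (hT : 0 < T) {Z : ℝ → Ω → ℝ} (h : SupermartingaleOn Q ℱ T Z)
    (h0 : ∀ᵐ ω ∂Q, Z 0 ω ≤ 1)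
    (hrc : ∀ᵐ ω ∂Q, ∀ t ∈ Set.Ico (0:ℝ) T, ContinuousWithinAt (fun t => Z t ω) (Set.Ici t) t)
    {η : ℝ} (hη : 0 < η) :
    Q {ω | ∃ t ∈ Set.Icc (0:ℝ) T, η < |Z t ω - 1|}
      ≤ ENNReal.ofReal (2 * (∫ ω, max (1 - Z T ω) 0 ∂Q) / η) := by
  set E : ℕ → Set Ω := fun n => {ω | ∃ k ≤ n + 1, η < |Z (T * k / (n + 1 : ℕ)) ω - 1|}
  have hE : ∀ n, Q (E n) ≤ ENNReal.ofReal (2 * (∫ ω, max (1 - Z T ω) 0 ∂Q) / η) := by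
    intro n
    refine grid_bound h h0 hη (fun k : ℕ => T * k / (n + 1 : ℕ)) (by simp) ?_ (n + 1) ?_
    · intro a b hab
      dsimp only
      gcongr
    · have : ((n + 1 : ℕ) : ℝ) ≠ 0 := by positivity
      exact mul_div_cancel_right₀ _ this
  have hle : Q {ω | ∃ t ∈ Set.Icc (0:ℝ) T, η < |Z t ω - 1|} ≤ Q (⋃ N, ⋂ n ≥ N, E n) := by
    refine measure_mono_ae ?_
    filter_upwards [hrc] with ω hω hex
    have hV : IsOpen {x : ℝ | η < |x - 1|} :=
      isOpen_lt continuous_const (by fun_prop)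
    have := grid_of_exists hT hω hV hex
    obtain ⟨N, hN⟩ := eventually_atTop.1 this
    exact mem_iUnion.2 ⟨N, mem_iInter₂.2 fun n hn => hN n hn⟩
  refine hle.trans ?_
  have hmono : Monotone fun N => ⋂ n ≥ N, E n := by
    intro a b hab ω hω
    simp only [mem_iInter] at hω ⊢
    exact fun n hn => hω n (hab.trans hn)
  rw [hmono.measure_iUnion]
  refine iSup_le fun N => (measure_mono ?_).trans (hE N)
  intro ω hω
  simp only [mem_iInter] at hω
  exact hω N le_rfl

lemma CadlagOn.bdd {T : ℝ} {f : ℝ → ℝ} (hf : CadlagOn T f) :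
    ∃ K : ℝ, ∀ t ∈ Set.Icc (0:ℝ) T, f t ≤ K := by
  refine isCompact_Icc.induction_on (p := fun s => ∃ K : ℝ, ∀ t ∈ s, f t ≤ K)
    ⟨0, by simp⟩ (fun s t hst ⟨K, hK⟩ => ⟨K, fun x hx => hK x (hst hx)⟩) ?_ ?_
  · rintro s t ⟨K, hK⟩ ⟨K', hK'⟩
    refine ⟨max K K', ?_⟩
    rintro x (hx | hx)
    · exact (hK x hx).trans (le_max_left _ _)
    · exact (hK' x hx).trans (le_max_right _ _)
  · intro t ht
    have hR : ∃ K, ∀ᶠ x in 𝓝[Set.Icc 0 T] t, t ≤ x → f x ≤ K := by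
      rcases ht.2.lt_or_eq with hlt | rfl
      · have hc := hf.1 t ⟨ht.1, hlt⟩
        have h1 : ∀ᶠ x in 𝓝[Set.Ici t] t, f x < f t + 1 :=
          hc.tendsto.eventually (gt_mem_nhds (by linarith))
        refine ⟨f t + 1, ?_⟩
        rw [eventually_nhdsWithin_iff] at h1 ⊢
        filter_upwards [h1] with x hx _ h2 using (hx h2).le
      · refine ⟨f t, ?_⟩
        filter_upwards [self_mem_nhdsWithin] with x hx h2
        rw [le_antisymm hx.2 h2]
    have hL : ∃ K, ∀ᶠ x in 𝓝[Set.Icc 0 T] t, x < t → f x ≤ K := by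
      rcases ht.1.lt_or_eq with hlt | rfl
      · obtain ⟨l, hl⟩ := hf.2 t ⟨hlt, ht.2⟩
        have h1 : ∀ᶠ x in 𝓝[Set.Iio t] t, f x < l + 1 :=
          hl.eventually (gt_mem_nhds (by linarith))
        refine ⟨l + 1, ?_⟩
        rw [eventually_nhdsWithin_iff] at h1 ⊢
        filter_upwards [h1] with x hx _ h2 using (hx h2).le
      · refine ⟨0, ?_⟩
        filter_upwards [self_mem_nhdsWithin] with x hx h2
        exact absurd hx.1 (not_le.2 h2)
    obtain ⟨K, hK⟩ := hR
    obtain ⟨K', hK'⟩ := hL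
    refine ⟨{x | f x ≤ max K K'}, ?_, max K K', fun x hx => hx⟩
    filter_upwards [hK, hK'] with x h1 h2
    rcases le_or_gt t x with h | h
    · exact (h1 h).trans (le_max_left _ _)
    · exact (h2 h).trans (le_max_right _ _)

lemma sup_tail {P : Measure Ω} [IsProbabilityMeasure P] {ℱ : Filtration ℝ m0} {T : ℝ}
    (hT : 0 < T) {X : ℝ → Ω → ℝ} (hX : IsProcess P ℱ T X) :
    Tendsto (fun K : ℕ => P {ω | ∃ t ∈ Set.Icc (0:ℝ) T, (K:ℝ) < X t ω}) atTop (𝓝 0) := by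
  set G : ℕ → Set Ω := fun K => ⋃ n : ℕ, ⋃ k : ℕ, ⋃ (_ : k ≤ n + 1),
    {ω | (K:ℝ) < X (T * k / (n + 1 : ℕ)) ω} with hG
  have hGm : ∀ K, MeasurableSet (G K) := fun K =>
    MeasurableSet.iUnion fun n => MeasurableSet.iUnion fun k => MeasurableSet.iUnion fun hk =>
      ℱ.le _ _ (hX.adapted _ (grid_mem hT hk) measurableSet_Ioi)
  have hanti : Antitone G := by
    intro a b hab ω hω
    simp only [hG, mem_iUnion, mem_setOf_eq] at hω ⊢
    obtain ⟨n, k, hk, h⟩ := hω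
    exact ⟨n, k, hk, lt_of_le_of_lt (by exact_mod_cast hab) h⟩
  have hlim := tendsto_measure_iInter_atTop (μ := P) (fun K => (hGm K).nullMeasurableSet) hanti
    ⟨0, measure_ne_top _ _⟩
  have hz : P (⋂ K, G K) = 0 := by
    rw [← compl_compl (⋂ K, G K), ← mem_ae_iff]
    filter_upwards [hX.cadlag] with ω hω hmem
    obtain ⟨K, hK⟩ := hω.bdd
    obtain ⟨m, hm⟩ := exists_nat_ge K
    have := mem_iInter.1 hmem m
    simp only [hG, mem_iUnion, mem_setOf_eq] at this
    obtain ⟨n, k, hk, h⟩ := this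
    have := hK _ (grid_mem hT hk)
    linarith
  rw [hz] at hlim
  refine tendsto_of_tendsto_of_tendsto_of_le_of_le tendsto_const_nhds hlim
    (fun _ => zero_le) fun K => ?_
  refine measure_mono_ae ?_
  filter_upwards [hX.cadlag] with ω hω hex
  obtain ⟨n, k, hk, h⟩ := (grid_of_exists hT hω.1 (isOpen_Ioi (a := (K:ℝ))) hex).exists
  change ω ∈ G K
  simp only [hG, mem_iUnion, mem_setOf_eq]
  exact ⟨n, k, hk, h⟩

lemma ac_tendsto {P Q : Measure Ω} [IsProbabilityMeasure P] [IsProbabilityMeasure Q]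
    (hPQ : P ≪ Q) {s : ℕ → Set Ω} (hs : Tendsto (fun n => Q (s n)) atTop (𝓝 0)) :
    Tendsto (fun n => P (s n)) atTop (𝓝 0) := by
  have h1 : Tendsto (Q ∘ fun n => toMeasurable Q (s n)) atTop (𝓝 0) := by
    refine hs.congr fun n => (measure_toMeasurable _).symm
  have hf : ∫⁻ ω, P.rnDeriv Q ω ∂Q ≠ ⊤ := (Measure.lintegral_rnDeriv_lt_top P Q).ne
  have h2 := tendsto_setLIntegral_zero hf h1
  refine tendsto_of_tendsto_of_tendsto_of_le_of_le tendsto_const_nhds h2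
    (fun _ => zero_le) fun n => ?_
  refine (measure_mono (subset_toMeasurable Q (s n))).trans ?_
  exact (Measure.setLIntegral_rnDeriv hPQ _).ge

lemma FatouLim.tendsto_T {P : Measure Ω} {T : ℝ} (hT : 0 < T) {Xn : ℕ → ℝ → Ω → ℝ}
    {X : ℝ → Ω → ℝ} (h : FatouLim P T Xn X) :
    ∀ᵐ ω ∂P, Tendsto (fun n => Xn n T ω) atTop (𝓝 (X T ω)) := by
  obtain ⟨D, -, hD, hTD, -, h⟩ := h
  have hs : D ∩ Set.Ici T = {T} := by
    ext x; constructor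
    · rintro ⟨h1, h2⟩; exact le_antisymm (hD h1).2 h2
    · rintro rfl; exact ⟨hTD, Set.mem_Ici.2 le_rfl⟩
  filter_upwards [h] with ω hω
  obtain ⟨h1, h2⟩ := hω T ⟨hT.le, le_rfl⟩
  rw [hs, nhdsWithin_singleton] at h1 h2
  rw [← EReal.tendsto_coe]
  refine tendsto_of_liminf_eq_limsup ?_ ?_
  · rw [h1]
    exact ((tendsto_pure_nhds (fun s : ℝ =>
      liminf (fun n : ℕ => (Xn n s ω : EReal)) atTop) T).liminf_eq).symm
  · rw [h2]
    exact ((tendsto_pure_nhds (fun s : ℝ =>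
      limsup (fun n : ℕ => (Xn n s ω : EReal)) atTop) T).limsup_eq).symm

lemma StrictlyPos.pos {P : Measure Ω} {T : ℝ} {X : ℝ → Ω → ℝ} (h : StrictlyPos P T X) :
    ∀ᵐ ω ∂P, ∀ t ∈ Set.Icc (0:ℝ) T, 0 < X t ω := by
  filter_upwards [h] with ω hω t ht
  have hb : BddBelow (Set.range fun t : Set.Icc (0:ℝ) T => X t ω) := by
    by_contra hb
    rw [Real.iInf_of_not_bddBelow hb] at hω
    exact lt_irrefl _ hω
  exact hω.trans_le (ciInf_le hb ⟨t, ht⟩)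

theorem numeraire_unif_approx
    {Ω : Type*} {m0 : MeasurableSpace Ω} (P : Measure Ω) [IsProbabilityMeasure P]
    (ℱ : Filtration ℝ m0) (T : ℝ) (hT : 0 < T)
    (hF_rightCont : ∀ t : ℝ, ℱ t = ⨅ s ∈ Set.Ioi t, ℱ s)
    (hF_complete : ∀ (t : ℝ) (A : Set Ω), P A = 0 → MeasurableSet[ℱ t] A)
    (𝒳 : Set (ℝ → Ω → ℝ)) (h𝒳 : IsWealthProcessSet P ℱ T 𝒳)
    (hNA1 : NA1 P T 𝒳)
    (Q : Measure Ω) [IsProbabilityMeasure Q] (hQP : Q ≪ P) (hPQ : P ≪ Q)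
    (Xhat : ℝ → Ω → ℝ) (hXhat_proc : IsProcess P ℱ T Xhat)
    (hXhat_pos : StrictlyPos P T Xhat) (hXhat0 : ∀ᵐ ω ∂P, 1 ≤ Xhat 0 ω)
    (hXhat_fatou : ∃ Yn : ℕ → ℝ → Ω → ℝ, (∀ n, Yn n ∈ 𝒳) ∧ FatouLim P T Yn Xhat)
    (hXhat_num : ∀ X ∈ 𝒳, SupermartingaleOn Q ℱ T (fun t ω => X t ω / Xhat t ω)) :
    ∃ Xn : ℕ → ℝ → Ω → ℝ, (∀ n, Xn n ∈ 𝒳) ∧ UnifTendstoInProb P T Xn Xhat := by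
  obtain ⟨Y, hY, hfat⟩ := hXhat_fatou
  refine ⟨Y, hY, ?_⟩
  intro ε hε
  have hpos := hXhat_pos.pos
  have hlimT := hfat.tendsto_T hT
  have h0mem : (0:ℝ) ∈ Set.Icc (0:ℝ) T := ⟨le_rfl, hT.le⟩
  have hTmem : T ∈ Set.Icc (0:ℝ) T := ⟨hT.le, le_rfl⟩
  -- the defect at the terminal time vanishes
  have hδ : Tendsto (fun n => ∫ ω, max (1 - Y n T ω / Xhat T ω) 0 ∂Q) atTop (𝓝 0) := by
    have : Tendsto (fun n => ∫ ω, max (1 - Y n T ω / Xhat T ω) 0 ∂Q) atTop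
        (𝓝 (∫ _ω, (0:ℝ) ∂Q)) := by
      refine tendsto_integral_of_dominated_convergence (fun _ => (1:ℝ)) ?_
        (integrable_const _) ?_ ?_
      · intro n
        exact ((integrable_const (1:ℝ)).sub
          ((hXhat_num _ (hY n)).2.1 T hTmem)).pos_part.aestronglyMeasurable
      · intro n
        filter_upwards [hQP.ae_le hpos, hQP.ae_le (h𝒳.proc _ (hY n)).nonneg] with ω h1 h2
        have : 0 ≤ Y n T ω / Xhat T ω := div_nonneg (h2 T hTmem) (h1 T hTmem).le
        rw [Real.norm_of_nonneg (le_max_right _ _)]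
        exact max_le (by linarith) zero_le_one
      · filter_upwards [hQP.ae_le hpos, hQP.ae_le hlimT] with ω h1 h2
        have h3 := h2.div_const (Xhat T ω)
        rw [div_self (h1 T hTmem).ne'] at h3
        have h4 := (h3.const_sub 1).max (tendsto_const_nhds (x := (0:ℝ)))
        simpa using h4
    simpa using this
  have hF : ∀ η : ℝ, 0 < η → Tendsto
      (fun n => P {ω | ∃ t ∈ Set.Icc (0:ℝ) T, η < |Y n t ω / Xhat t ω - 1|}) atTop (𝓝 0) := by
    intro η hη
    apply ac_tendsto hPQ
    have hlim : Tendsto (fun n => ENNReal.ofReal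
        (2 * (∫ ω, max (1 - Y n T ω / Xhat T ω) 0 ∂Q) / η)) atTop (𝓝 0) := by
      have := ENNReal.tendsto_ofReal ((hδ.const_mul 2).div_const η)
      simpa using this
    refine tendsto_of_tendsto_of_tendsto_of_le_of_le tendsto_const_nhds hlim
      (fun _ => zero_le) fun n => ?_
    refine unif_bound hT (hXhat_num _ (hY n)) ?_ ?_ hη
    · filter_upwards [hQP.ae_le hXhat0, hQP.ae_le (h𝒳.init_one _ (hY n))] with ω h1 h2
      rw [h2, div_le_one (by linarith)]
      exact h1
    · filter_upwards [hQP.ae_le hpos, hQP.ae_le hXhat_proc.cadlag,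
        hQP.ae_le (h𝒳.proc _ (hY n)).cadlag] with ω h1 h2 h3 t ht
      exact (h3.1 t ht).div (h2.1 t ht) (h1 t ⟨ht.1, ht.2.le⟩).ne'
  rw [ENNReal.tendsto_nhds_zero]
  intro c hc
  have hc2 : 0 < c / 2 := ENNReal.half_pos hc.ne'
  obtain ⟨K, hK⟩ := ((ENNReal.tendsto_nhds_zero.1 (sup_tail hT hXhat_proc) _ hc2).and
    (eventually_ge_atTop 1)).exists
  obtain ⟨hK, hK1⟩ := hK
  have hKpos : (0:ℝ) < K := by exact_mod_cast hK1
  filter_upwards [ENNReal.tendsto_nhds_zero.1 (hF (ε / (2 * K)) (by positivity)) _ hc2] with n hn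
  calc P {ω | ∃ t ∈ Set.Icc (0:ℝ) T, ε ≤ |Y n t ω - Xhat t ω|}
      ≤ P ({ω | ∃ t ∈ Set.Icc (0:ℝ) T, (K:ℝ) < Xhat t ω} ∪
          {ω | ∃ t ∈ Set.Icc (0:ℝ) T, ε / (2 * K) < |Y n t ω / Xhat t ω - 1|}) := by
        refine measure_mono_ae ?_
        filter_upwards [hpos] with ω hω hex
        obtain ⟨t, ht, hle⟩ := hex
        have hx := hω t ht
        by_cases hlt : (K:ℝ) < Xhat t ω
        · exact Or.inl ⟨t, ht, hlt⟩
        · refine Or.inr ⟨t, ht, ?_⟩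
          push Not at hlt
          have h1 : |Y n t ω / Xhat t ω - 1| = |Y n t ω - Xhat t ω| / Xhat t ω := by
            rw [div_sub_one hx.ne', abs_div, abs_of_pos hx]
          rw [h1]
          calc ε / (2 * K) < ε / K := by
                apply div_lt_div_of_pos_left hε hKpos; linarith
            _ ≤ ε / Xhat t ω := by gcongr
            _ ≤ _ := by gcongr
    _ ≤ c / 2 + c / 2 := (measure_union_le _ _).trans (add_le_add hK hn)
    _ = c := ENNReal.add_halves c

end WPS
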